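/- arXiv:1503.04350 — 6 statements merged into one kernel-verified Lean document; each statement's English description precedes it below -/
import Mathlib

section
/- Let μ, ν be real numbers with 0 < ν < μ. Then for every real x ≠ 0, the function x ↦ log(sinh(νx)/sinh(μx)) is twice differentiable at x and its second derivative there is strictly negative; equivalently, μ² sinh²(νx) < ν² sinh²(μx) for all x ≠ 0. -/
open Real

/-!
Away from `0`, the second derivative of `log (sinh (ν x) / sinh (μ x))` is
`μ² / sinh² (μ x) - ν² / sinh² (ν x)`, because `(log ∘ sinh)' = coth` and `coth' = -1 / sinh²`.
Its sign is decided by comparing the values of the even function `sinh t / t` at `ν x` and `μ x`.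
Now `sinh t / t` is the slope of the secant of `sinh` from the origin to `t`, and `sinh` is strictly
convex on `[0, ∞)`, so this slope increases strictly with `|t|`.
-/

lemma strictConvexOn_sinh : StrictConvexOn ℝ (Set.Ici 0) sinh := by
  refine StrictMonoOn.strictConvexOn_of_deriv (convex_Ici 0) continuous_sinh.continuousOn ?_
  rw [Real.deriv_sinh]
  exact cosh_strictMonoOn.mono interior_subset

lemma strictMonoOn_sinh_div_self : StrictMonoOn (fun t : ℝ ↦ sinh t / t) (Set.Ioi 0) := by
  intro s hs t ht hst
  simpa using strictConvexOn_sinh.secant_strict_mono Set.self_mem_Ici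
    (Set.mem_Ici_of_Ioi hs) (Set.mem_Ici_of_Ioi ht) hs.ne' ht.ne' hst

lemma sq_mul_sinh_sq_lt_sq_mul_sinh_sq {s t : ℝ} (hs : s ≠ 0) (hst : |s| < |t|) :
    t ^ 2 * sinh s ^ 2 < s ^ 2 * sinh t ^ 2 := by
  have hs' : 0 < |s| := abs_pos.2 hs
  have ht' : 0 < |t| := hs'.trans hst
  have secant_lt : sinh |s| / |s| < sinh |t| / |t| := strictMonoOn_sinh_div_self hs' ht' hst
  rw [div_lt_div_iff₀ hs' ht', ← abs_sinh, ← abs_sinh, ← abs_mul, ← abs_mul] at secant_lt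
  simpa only [mul_pow, mul_comm] using sq_lt_sq.2 secant_lt

lemma sq_mul_sinh_mul_sq_lt_sq_mul_sinh_mul_sq {a b x : ℝ} (ha : a ≠ 0) (hab : |a| < |b|)
    (hx : x ≠ 0) :
    b ^ 2 * sinh (a * x) ^ 2 < a ^ 2 * sinh (b * x) ^ 2 := by
  have hlt : |a * x| < |b * x| := by
    simpa only [abs_mul] using mul_lt_mul_of_pos_right hab (abs_pos.2 hx)
  have hsq := sq_mul_sinh_sq_lt_sq_mul_sinh_sq (mul_ne_zero ha hx) hlt
  refine lt_of_mul_lt_mul_left ?_ (sq_nonneg x)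
  linear_combination hsq

lemma hasDerivAt_cosh_div_sinh {x : ℝ} (hx : x ≠ 0) :
    HasDerivAt (fun y ↦ cosh y / sinh y) (-1 / sinh x ^ 2) x := by
  refine ((hasDerivAt_cosh x).div (hasDerivAt_sinh x) (sinh_ne_zero.2 hx)).congr_deriv ?_
  congr 1
  linear_combination -cosh_sq x

section LogSinhRatio

variable {a b x : ℝ}

lemma hasDerivAt_log_sinh_mul (ha : a ≠ 0) (hx : x ≠ 0) :
    HasDerivAt (fun y ↦ log (sinh (a * y))) (a * (cosh (a * x) / sinh (a * x))) x :=
  (((hasDerivAt_const_mul a).sinh).log (sinh_ne_zero.2 (mul_ne_zero ha hx))).congr_deriv (by ring)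

lemma hasDerivAt_mul_cosh_div_sinh_mul (ha : a ≠ 0) (hx : x ≠ 0) :
    HasDerivAt (fun y ↦ a * (cosh (a * y) / sinh (a * y))) (-(a ^ 2 / sinh (a * x) ^ 2)) x :=
  (((hasDerivAt_cosh_div_sinh (mul_ne_zero ha hx)).comp x
    (hasDerivAt_const_mul a)).const_mul a).congr_deriv (by ring)

lemma hasDerivAt_log_sinh_div_sinh (ha : a ≠ 0) (hb : b ≠ 0) (hx : x ≠ 0) :
    HasDerivAt (fun y ↦ log (sinh (a * y) / sinh (b * y)))
      (a * (cosh (a * x) / sinh (a * x)) - b * (cosh (b * x) / sinh (b * x))) x := by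
  refine ((hasDerivAt_log_sinh_mul ha hx).sub
    (hasDerivAt_log_sinh_mul hb hx)).congr_of_eventuallyEq ?_
  filter_upwards [eventually_ne_nhds hx] with y hy
  exact log_div (sinh_ne_zero.2 (mul_ne_zero ha hy)) (sinh_ne_zero.2 (mul_ne_zero hb hy))

lemma hasDerivAt_deriv_log_sinh_div_sinh (ha : a ≠ 0) (hb : b ≠ 0) (hx : x ≠ 0) :
    HasDerivAt (deriv fun y ↦ log (sinh (a * y) / sinh (b * y)))
      (b ^ 2 / sinh (b * x) ^ 2 - a ^ 2 / sinh (a * x) ^ 2) x := by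
  refine (((hasDerivAt_mul_cosh_div_sinh_mul ha hx).sub
    (hasDerivAt_mul_cosh_div_sinh_mul hb hx)).congr_of_eventuallyEq ?_).congr_deriv (by ring)
  filter_upwards [eventually_ne_nhds hx] with y hy
  exact (hasDerivAt_log_sinh_div_sinh ha hb hy).deriv

end LogSinhRatio

/-- For `0 < ν < μ`, the function `x ↦ log (sinh (ν x) / sinh (μ x))` is twice
differentiable at every `x ≠ 0` with strictly negative second derivative there;
equivalently, `μ² sinh²(νx) < ν² sinh²(μx)` for all `x ≠ 0`. -/
theorem log_sinh_ratio_strictly_concave (μ ν : ℝ) (hν : 0 < ν) (hνμ : ν < μ) :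
    ∀ x : ℝ, x ≠ 0 →
      DifferentiableAt ℝ (fun x : ℝ => Real.log (Real.sinh (ν * x) / Real.sinh (μ * x))) x ∧
      DifferentiableAt ℝ
        (deriv (fun x : ℝ => Real.log (Real.sinh (ν * x) / Real.sinh (μ * x)))) x ∧
      deriv (deriv (fun x : ℝ => Real.log (Real.sinh (ν * x) / Real.sinh (μ * x)))) x < 0 ∧
      μ ^ 2 * Real.sinh (ν * x) ^ 2 < ν ^ 2 * Real.sinh (μ * x) ^ 2 := by
  intro x hx
  have hμ : 0 < μ := hν.trans hνμ
  have sinh_sq_pos {a : ℝ} (ha : 0 < a) : 0 < sinh (a * x) ^ 2 :=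
    sq_pos_of_ne_zero (sinh_ne_zero.2 (mul_ne_zero ha.ne' hx))
  have sq_mul_lt : μ ^ 2 * sinh (ν * x) ^ 2 < ν ^ 2 * sinh (μ * x) ^ 2 :=
    sq_mul_sinh_mul_sq_lt_sq_mul_sinh_mul_sq hν.ne' (by rwa [abs_of_pos hν, abs_of_pos hμ]) hx
  have hasDerivAt_deriv := hasDerivAt_deriv_log_sinh_div_sinh hν.ne' hμ.ne' hx
  refine ⟨(hasDerivAt_log_sinh_div_sinh hν.ne' hμ.ne' hx).differentiableAt,
    hasDerivAt_deriv.differentiableAt, ?_, sq_mul_lt⟩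
  rw [hasDerivAt_deriv.deriv, sub_neg, div_lt_div_iff₀ (sinh_sq_pos hμ) (sinh_sq_pos hν)]
  exact sq_mul_lt
end

section
/- Let K(k) = ∫₀^{π/2} (1 − k² sin²θ)^{−1/2} dθ for k ∈ (0,1) and set k' = √(1 − k²). Then the function k ↦ K(k')/K(k) is strictly decreasing on the interval (0,1): if 0 < k₁ < k₂ < 1 then K(√(1−k₂²))/K(k₂) < K(√(1−k₁²))/K(k₁). -/
open Real

/-!
In terms of the parameter `m = k ^ 2` the complementary modulus becomes `1 - m`. For fixed `θ` the
integrand `(1 - m sin² θ) ^ (-1/2)` is positive and increasing in `m < 1`, strictly where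
`sin θ ≠ 0`, so its integral is positive and strictly increasing in `m`. Hence, as `m` grows in
`(0, 1)`, the numerator of the ratio (the integral at `1 - m`) decreases and the denominator
increases.
-/

/-- The complete elliptic integral `∫₀^{π/2} (1 - m sin² θ) ^ p dθ`, as a function of the parameter
`m = k ^ 2` instead of the modulus `k`: the exponent `p = -1/2` gives Legendre's `K(k)`, and
`p = 1/2` gives `E(k)`. It is meant for `m < 1`, where the base of the power is positive; for
`m ≥ 1` it can be a junk value of `rpow` or of a divergent integral. -/
noncomputable def ellipticIntegral (p m : ℝ) : ℝ :=
  ∫ θ in (0 : ℝ)..(π / 2), (1 - m * sin θ ^ 2) ^ p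

section

variable {p m : ℝ}

lemma one_sub_mul_sin_sq_pos (hm : m < 1) (θ : ℝ) : 0 < 1 - m * sin θ ^ 2 := by
  rcases (sq_nonneg (sin θ)).eq_or_lt with h_zero | h_pos
  · simp [← h_zero]
  · refine sub_pos.2 ?_
    calc m * sin θ ^ 2 < 1 * sin θ ^ 2 := by gcongr
      _ ≤ 1 := by simpa only [one_mul] using sin_sq_le_one θ

lemma continuous_one_sub_mul_sin_sq_rpow (hm : m < 1) :
    Continuous fun θ : ℝ ↦ (1 - m * sin θ ^ 2) ^ p :=
  Continuous.rpow_const (by fun_prop) fun θ ↦ .inl (one_sub_mul_sin_sq_pos hm θ).ne'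

lemma ellipticIntegral_pos (hm : m < 1) : 0 < ellipticIntegral p m :=
  intervalIntegral.intervalIntegral_pos_of_pos
    ((continuous_one_sub_mul_sin_sq_rpow hm).intervalIntegrable _ _)
    (fun θ ↦ rpow_pos_of_pos (one_sub_mul_sin_sq_pos hm θ) p) pi_div_two_pos

lemma strictMonoOn_ellipticIntegral (hp : p < 0) :
    StrictMonoOn (ellipticIntegral p) (Set.Iio 1) := by
  intro m₁ hm₁ m₂ hm₂ hm
  refine intervalIntegral.integral_lt_integral_of_continuousOn_of_le_of_exists_lt pi_div_two_pos
    (continuous_one_sub_mul_sin_sq_rpow hm₁).continuousOn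
    (continuous_one_sub_mul_sin_sq_rpow hm₂).continuousOn (fun θ _ ↦ ?_)
    ⟨π / 2, Set.right_mem_Icc.2 pi_div_two_pos.le, ?_⟩
  · exact rpow_le_rpow_of_nonpos (one_sub_mul_sin_sq_pos hm₂ θ) (by gcongr) hp.le
  · refine rpow_lt_rpow_of_neg (one_sub_mul_sin_sq_pos hm₂ _) ?_ hp
    simpa only [sin_pi_div_two, one_pow, mul_one] using sub_lt_sub_left hm 1

lemma strictAntiOn_ellipticIntegral_one_sub_div (hp : p < 0) :
    StrictAntiOn (fun m ↦ ellipticIntegral p (1 - m) / ellipticIntegral p m) (Set.Ioo 0 1) := by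
  rintro m₁ ⟨hm₁_pos, hm₁_lt⟩ m₂ ⟨hm₂_pos, hm₂_lt⟩ hm
  have h_num : ellipticIntegral p (1 - m₂) < ellipticIntegral p (1 - m₁) :=
    strictMonoOn_ellipticIntegral hp (sub_lt_self 1 hm₂_pos) (sub_lt_self 1 hm₁_pos)
      (sub_lt_sub_left hm 1)
  have h_den : ellipticIntegral p m₁ < ellipticIntegral p m₂ :=
    strictMonoOn_ellipticIntegral hp hm₁_lt hm₂_lt hm
  exact div_lt_div₀ h_num h_den.le (ellipticIntegral_pos (sub_lt_self 1 hm₁_pos)).le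
    (ellipticIntegral_pos hm₁_lt)

end

/-- The ratio `K(k')/K(k)` of complete elliptic integrals of the first kind,
with `k' = √(1 - k²)`, is strictly decreasing on `(0,1)`. -/
theorem ellipticK_ratio_strictAnti
    (K : ℝ → ℝ)
    (hK : ∀ k : ℝ, K k = ∫ θ in (0:ℝ)..(π/2), (1 - k ^ 2 * Real.sin θ ^ 2) ^ (-(1:ℝ)/2)) :
    ∀ k₁ k₂ : ℝ, 0 < k₁ → k₁ < k₂ → k₂ < 1 →
      K (Real.sqrt (1 - k₂ ^ 2)) / K k₂ < K (Real.sqrt (1 - k₁ ^ 2)) / K k₁ := by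
  intro k₁ k₂ hk₁ hk hk₂
  have h_sq_mem {k : ℝ} (h_pos : 0 < k) (h_lt : k < 1) : k ^ 2 ∈ Set.Ioo (0 : ℝ) 1 :=
    ⟨pow_pos h_pos 2, pow_lt_one₀ h_pos.le h_lt two_ne_zero⟩
  have h_sq₁ := h_sq_mem hk₁ (hk.trans hk₂)
  have h_sq₂ := h_sq_mem (hk₁.trans hk) hk₂
  have hK_sq (k : ℝ) : K k = ellipticIntegral (-1 / 2) (k ^ 2) := hK k
  rw [hK_sq, hK_sq, hK_sq, hK_sq, sq_sqrt (sub_nonneg.2 h_sq₁.2.le),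
    sq_sqrt (sub_nonneg.2 h_sq₂.2.le)]
  exact strictAntiOn_ellipticIntegral_one_sub_div (by norm_num) h_sq₁ h_sq₂
    (pow_lt_pow_left₀ hk hk₁.le two_ne_zero)
end

section
/- Fix L > 0 and δ > 0. For k ∈ (0,1) set t(k) = K(√(1−k²))/K(k), where K(k) = ∫₀^{π/2} (1 − k² sin²θ)^{−1/2} dθ, and suppose k satisfies the constraint (2δ/L)·(1/t(k)) < 1, i.e. 2δ/L < t(k). For such k define N(k) = (8π²/L)·Σ_{m=1}^∞ sinh²(2 m π δ/L) / sinh²(m π t(k)). Then the series defining N(k) converges, and N is strictly increasing: if 0 < k₁ < k₂ < 1 both satisfy 2δ/L < t(kᵢ), then N(k₁) < N(k₂). -/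
open Real

/-!
Each summand `sinh² (m a) / sinh² (m b)` is strictly decreasing in `b > 0`, and, because
`exp (-x) * sinh x` is increasing, it is at most `exp (2 m (a - b))` for `a < b`; so the series is
dominated by a geometric one and its sum is strictly decreasing in `b`. Up to the factor `8π²/L`,
`N(k)` is this sum at `a = 2πδ/L` and `b = π t(k)`. It remains to see that `t` is strictly
decreasing: `K` is positive and strictly increasing in the modulus, while the complementary modulus
`√(1 - k²)` decreases.
-/

section EllipticIntegral

/-- The complete elliptic integral of the first kind `K(k)`, as a function of the modulus `k`
(not of the parameter `k²`); meaningful for `k² < 1`. -/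
noncomputable def ellipticK (k : ℝ) : ℝ :=
  ∫ θ in (0 : ℝ)..(π / 2), (1 - k ^ 2 * sin θ ^ 2) ^ (-(1 : ℝ) / 2)

/-- The ratio `K(k') / K(k)` of the quarter periods belonging to the modulus `k`, where
`k' = √(1 - k²)` is the complementary modulus; meaningful for `0 < k² < 1`. -/
noncomputable def quarterPeriodRatio (k : ℝ) : ℝ :=
  ellipticK √(1 - k ^ 2) / ellipticK k

variable {k k₁ k₂ : ℝ}

lemma one_sub_sq_mul_sin_sq_pos (hk : k ^ 2 < 1) (θ : ℝ) : 0 < 1 - k ^ 2 * sin θ ^ 2 :=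
  sub_pos.mpr <| (mul_le_of_le_one_right (sq_nonneg k) (sin_sq_le_one θ)).trans_lt hk

lemma continuous_ellipticK_integrand (hk : k ^ 2 < 1) :
    Continuous fun θ : ℝ => (1 - k ^ 2 * sin θ ^ 2) ^ (-(1 : ℝ) / 2) :=
  Continuous.rpow_const (by fun_prop) fun θ => Or.inl (one_sub_sq_mul_sin_sq_pos hk θ).ne'

lemma ellipticK_pos (hk : k ^ 2 < 1) : 0 < ellipticK k :=
  intervalIntegral.intervalIntegral_pos_of_pos
    ((continuous_ellipticK_integrand hk).intervalIntegrable _ _)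
    (fun θ => rpow_pos_of_pos (one_sub_sq_mul_sin_sq_pos hk θ) _) (by positivity)

lemma ellipticK_lt_ellipticK (h : k₁ ^ 2 < k₂ ^ 2) (hk₂ : k₂ ^ 2 < 1) :
    ellipticK k₁ < ellipticK k₂ := by
  refine intervalIntegral.integral_lt_integral_of_continuousOn_of_le_of_exists_lt
    (by positivity) (continuous_ellipticK_integrand (h.trans hk₂)).continuousOn
    (continuous_ellipticK_integrand hk₂).continuousOn (fun θ _ => ?_)
    ⟨π / 2, ⟨by positivity, le_rfl⟩, ?_⟩
  · refine rpow_le_rpow_of_nonpos (one_sub_sq_mul_sin_sq_pos hk₂ θ) ?_ (by norm_num)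
    gcongr
  · refine rpow_lt_rpow_of_neg (one_sub_sq_mul_sin_sq_pos hk₂ _) ?_ (by norm_num)
    rw [sin_pi_div_two]
    linarith

lemma strictAntiOn_quarterPeriodRatio : StrictAntiOn quarterPeriodRatio (Set.Ioo 0 1) := by
  intro k₁ hk₁ k₂ hk₂ hlt
  have hsq : k₁ ^ 2 < k₂ ^ 2 := pow_lt_pow_left₀ hlt hk₁.1.le two_ne_zero
  have hsq_pos : 0 < k₁ ^ 2 := pow_pos hk₁.1 2
  have hsq_lt_one : k₂ ^ 2 < 1 := pow_lt_one₀ hk₂.1.le hk₂.2 two_ne_zero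
  have hcompl₁ : √(1 - k₁ ^ 2) ^ 2 = 1 - k₁ ^ 2 := sq_sqrt (by linarith)
  have hcompl₂ : √(1 - k₂ ^ 2) ^ 2 = 1 - k₂ ^ 2 := sq_sqrt (by linarith)
  have hnum : ellipticK √(1 - k₂ ^ 2) < ellipticK √(1 - k₁ ^ 2) :=
    ellipticK_lt_ellipticK (by linarith) (by linarith)
  have hden : ellipticK k₁ < ellipticK k₂ := ellipticK_lt_ellipticK hsq hsq_lt_one
  exact div_lt_div₀ hnum hden.le (ellipticK_pos (by linarith)).le (ellipticK_pos (by linarith))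

end EllipticIntegral

section SinhSeries

lemma monotone_exp_neg_mul_sinh : Monotone fun x : ℝ => exp (-x) * sinh x := by
  have hformula (x : ℝ) : exp (-x) * sinh x = (1 - exp (-x) ^ 2) / 2 := by
    rw [sinh_eq, exp_neg]
    field_simp
  intro x y hxy
  simp only [hformula]
  gcongr

lemma sinh_div_sinh_le_exp_sub {x y : ℝ} (hy : 0 < y) (hxy : x ≤ y) :
    sinh x / sinh y ≤ exp (x - y) := by
  rw [div_le_iff₀ (sinh_pos_iff.mpr hy)]
  calc sinh x = exp x * (exp (-x) * sinh x) := by rw [← mul_assoc, ← exp_add]; simp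
    _ ≤ exp x * (exp (-y) * sinh y) :=
        mul_le_mul_of_nonneg_left (monotone_exp_neg_mul_sinh hxy) (exp_pos x).le
    _ = exp (x - y) * sinh y := by rw [← mul_assoc, ← exp_add, sub_eq_add_neg]

variable {a b c : ℝ} {p : ℕ}

lemma abs_sinh_mul_div_sinh_mul_le (hab : |a| < b) {x : ℝ} (hx : 0 < x) :
    |sinh (x * a) / sinh (x * b)| ≤ exp (x * (|a| - b)) := by
  have hb : 0 < b := (abs_nonneg a).trans_lt hab
  rw [abs_div, abs_sinh, abs_sinh, abs_mul, abs_mul, abs_of_pos hx, abs_of_pos hb, mul_sub]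
  exact sinh_div_sinh_le_exp_sub (by positivity) (by gcongr)

lemma summable_sinh_div_sinh_pow (hab : |a| < b) (hp : p ≠ 0) :
    Summable fun m : ℕ => (sinh ((m + 1) * a) / sinh ((m + 1) * b)) ^ p := by
  have hratio : exp (|a| - b) ^ p < 1 :=
    pow_lt_one₀ (exp_pos _).le (exp_lt_one_iff.mpr (sub_neg.mpr hab)) hp
  have hgeom : Summable fun m : ℕ => (exp (|a| - b) ^ p) ^ (m + 1) :=
    (summable_nat_add_iff 1).mpr (summable_geometric_of_lt_one (by positivity) hratio)
  refine hgeom.of_norm_bounded fun m => ?_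
  calc ‖(sinh ((m + 1) * a) / sinh ((m + 1) * b)) ^ p‖
      = |sinh ((m + 1) * a) / sinh ((m + 1) * b)| ^ p := by rw [norm_pow, norm_eq_abs]
    _ ≤ exp ((m + 1) * (|a| - b)) ^ p := by
        gcongr
        exact abs_sinh_mul_div_sinh_mul_le hab m.cast_add_one_pos
    _ = (exp (|a| - b) ^ p) ^ (m + 1) := by
        rw [← Nat.cast_add_one, exp_nat_mul, pow_right_comm]

lemma sinh_mul_div_sinh_mul_lt {x : ℝ} (hx : 0 < x) (ha : 0 < a) (hb : 0 < b) (hbc : b < c) :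
    sinh (x * a) / sinh (x * c) < sinh (x * a) / sinh (x * b) :=
  div_lt_div_of_pos_left (sinh_pos_iff.mpr (by positivity)) (sinh_pos_iff.mpr (by positivity))
    (sinh_lt_sinh.mpr (by gcongr))

lemma strictAntiOn_tsum_sinh_div_sinh_pow (ha : 0 < a) (hp : p ≠ 0) :
    StrictAntiOn (fun b => ∑' m : ℕ, (sinh ((m + 1) * a) / sinh ((m + 1) * b)) ^ p)
      (Set.Ioi a) := by
  intro b hb c hc hbc
  have hsummable {d : ℝ} (hd : a < d) :
      Summable fun m : ℕ => (sinh ((m + 1) * a) / sinh ((m + 1) * d)) ^ p :=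
    summable_sinh_div_sinh_pow (by rwa [abs_of_pos ha]) hp
  have hterm (m : ℕ) : (sinh ((m + 1) * a) / sinh ((m + 1) * c)) ^ p <
      (sinh ((m + 1) * a) / sinh ((m + 1) * b)) ^ p := by
    have hc_pos : 0 < c := ha.trans hc
    refine pow_lt_pow_left₀
      (sinh_mul_div_sinh_mul_lt m.cast_add_one_pos ha (ha.trans hb) hbc) ?_ hp
    exact div_nonneg (sinh_nonneg_iff.mpr (by positivity)) (sinh_nonneg_iff.mpr (by positivity))
  exact Summable.tsum_lt_tsum (fun m => (hterm m).le) (hterm 0) (hsummable hc) (hsummable hb)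

end SinhSeries

/-- For fixed `L, δ > 0` and `t(k) = K(√(1-k²))/K(k)`, on the set of moduli `k ∈ (0,1)`
satisfying the analytic condition `2δ/L < t(k)`, the series
`N(k) = (8π²/L) Σ_{m≥1} sinh²(2mπδ/L)/sinh²(mπ t(k))` converges and `N` is strictly
increasing in `k`. -/
theorem ILW_norm_series_summable_strictMono
    (L δ : ℝ) (hL : 0 < L) (hδ : 0 < δ)
    (K : ℝ → ℝ)
    (hK : ∀ k : ℝ, K k = ∫ θ in (0:ℝ)..(π/2), (1 - k ^ 2 * Real.sin θ ^ 2) ^ (-(1:ℝ)/2))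
    (t : ℝ → ℝ) (ht : ∀ k : ℝ, t k = K (Real.sqrt (1 - k ^ 2)) / K k)
    (N : ℝ → ℝ)
    (hN : ∀ k : ℝ, N k = (8 * π ^ 2 / L) *
      ∑' m : ℕ, Real.sinh (2 * (m + 1) * π * δ / L) ^ 2
        / Real.sinh ((m + 1) * π * t k) ^ 2) :
    (∀ k : ℝ, 0 < k → k < 1 → 2 * δ / L < t k →
      Summable (fun m : ℕ => Real.sinh (2 * (m + 1) * π * δ / L) ^ 2
        / Real.sinh ((m + 1) * π * t k) ^ 2)) ∧
    (∀ k₁ k₂ : ℝ, 0 < k₁ → k₁ < k₂ → k₂ < 1 →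
      2 * δ / L < t k₁ → 2 * δ / L < t k₂ → N k₁ < N k₂) := by
  obtain rfl : K = ellipticK := funext hK
  obtain rfl : t = quarterPeriodRatio := funext ht
  set a : ℝ := 2 * π * δ / L
  have ha : 0 < a := by positivity
  have hlt_of_cond {k : ℝ} (hk : 2 * δ / L < quarterPeriodRatio k) :
      a < π * quarterPeriodRatio k :=
    calc a = π * (2 * δ / L) := by ring
      _ < π * quarterPeriodRatio k := by gcongr
  have hterm (k : ℝ) (m : ℕ) :
      sinh (2 * (m + 1) * π * δ / L) ^ 2 / sinh ((m + 1) * π * quarterPeriodRatio k) ^ 2 =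
        (sinh ((m + 1) * a) / sinh ((m + 1) * (π * quarterPeriodRatio k))) ^ 2 := by
    rw [div_pow, ← mul_assoc, show 2 * (m + 1) * π * δ / L = (m + 1) * a by ring]
  simp only [hterm] at hN ⊢
  refine ⟨fun k _ _ hk => ?_, fun k₁ k₂ hk₁ hlt hk₂ hcond₁ hcond₂ => ?_⟩
  · exact summable_sinh_div_sinh_pow (by rw [abs_of_pos ha]; exact hlt_of_cond hk) two_ne_zero
  · have hratio : quarterPeriodRatio k₂ < quarterPeriodRatio k₁ :=
      strictAntiOn_quarterPeriodRatio ⟨hk₁, hlt.trans hk₂⟩ ⟨hk₁.trans hlt, hk₂⟩ hlt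
    rw [hN, hN]
    gcongr
    exact strictAntiOn_tsum_sinh_div_sinh_pow ha two_ne_zero (hlt_of_cond hcond₂)
      (hlt_of_cond hcond₁) (by gcongr)
end

section
/- Let E be a real inner product space and T : E → E a linear map that is symmetric: ⟨T x, y⟩ = ⟨x, T y⟩ for all x, y ∈ E. Let 𝟙, φ, u, ψ ∈ E and c, β ∈ ℝ, and set Λ = ⟨𝟙, 𝟙⟩. Assume Λ > 0, ⟨φ, 𝟙⟩ = 0, T 𝟙 = c·𝟙 − 2·φ, T u = 𝟙, T ψ = −φ − (β/Λ)·𝟙, and ⟨ψ, 𝟙⟩ = 0. Then ⟨u, 𝟙⟩·(c·Λ + 2β) = Λ². In particular, if c·Λ + 2β > 0 then ⟨u, 𝟙⟩ = Λ²/(cΛ + 2β) > 0. -/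
open RealInnerProductSpace

/-!
Eliminating `φ` between `T o` and `T ψ` shows that `w = o - 2ψ` satisfies `T w = (c + 2β/Λ) o`.
Pairing with `u`, where `T u = o`, and using symmetry gives
`Λ = ⟪o, w⟫ = ⟪T u, w⟫ = ⟪u, T w⟫ = (c + 2β/Λ) ⟪u, o⟫`.
-/

theorem map_sub_smul_eq_smul {R M N : Type*} [CommRing R] [AddCommGroup M] [Module R M]
    [AddCommGroup N] [Module R N] (f : M →ₗ[R] N) {x y : M} {p q : N} {a b k : R}
    (hx : f x = a • p - k • q) (hy : f y = -q - b • p) :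
    f (x - k • y) = (a + k * b) • p := by
  rw [map_sub, map_smul, hx, hy]
  module

theorem inner_apply_eq_mul_inner_of_apply_eq_smul {𝕜 E F : Type*} [RCLike 𝕜]
    [NormedAddCommGroup E] [InnerProductSpace 𝕜 E] [NormedAddCommGroup F] [InnerProductSpace 𝕜 F]
    {T : E →ₗ.[𝕜] F} {S : F →ₗ.[𝕜] E} (hTS : T.IsFormalAdjoint S) (u : T.domain) {w : S.domain}
    {a : 𝕜} {v : E} (hw : S w = a • v) :
    inner 𝕜 (T u) (w : F) = a * inner 𝕜 (u : E) v := by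
  rw [hTS, hw, inner_smul_right]

/-- The linearized ILW operator is unbounded on `L²`, whence the partially defined `T`. -/
theorem inner_inv_one_formula_general
    {E : Type*} [NormedAddCommGroup E] [InnerProductSpace ℝ E]
    (T : E →ₗ.[ℝ] E) (hsymm : T.IsFormalAdjoint T)
    (o u ψ : T.domain) (φ : E) (c β : ℝ) (Λ : ℝ) (hΛdef : Λ = ⟪(o : E), (o : E)⟫) (hΛ : 0 < Λ)
    (hTo : T o = c • (o : E) - (2 : ℝ) • φ)
    (hTu : T u = o)
    (hTψ : T ψ = -φ - (β / Λ) • (o : E))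
    (hψo : ⟪(ψ : E), (o : E)⟫ = 0) :
    ⟪(u : E), (o : E)⟫ * (c * Λ + 2 * β) = Λ ^ 2 ∧
    (0 < c * Λ + 2 * β →
      ⟪(u : E), (o : E)⟫ = Λ ^ 2 / (c * Λ + 2 * β) ∧ 0 < ⟪(u : E), (o : E)⟫) := by
  have apply_w : T (o - (2 : ℝ) • ψ) = (c + 2 * (β / Λ)) • (o : E) :=
    map_sub_smul_eq_smul T.toFun hTo hTψ
  have inner_o_w : ⟪(o : E), ((o - (2 : ℝ) • ψ : T.domain) : E)⟫ = Λ := by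
    simp [inner_sub_right, inner_smul_right, real_inner_comm (ψ : E), hψo, hΛdef]
  have pairing : Λ = (c + 2 * (β / Λ)) * ⟪(u : E), (o : E)⟫ := by
    rw [← inner_apply_eq_mul_inner_of_apply_eq_smul hsymm u apply_w, hTu, inner_o_w]
  have product_formula : ⟪(u : E), (o : E)⟫ * (c * Λ + 2 * β) = Λ ^ 2 := by
    field_simp at pairing
    linear_combination -pairing
  refine ⟨product_formula, fun hpos => ?_⟩
  have quotient_formula := eq_div_of_mul_eq hpos.ne' product_formula
  exact ⟨quotient_formula, quotient_formula ▸ by positivity⟩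

/-- Abstract form of the identity `⟨ℒ⁻¹1, 1⟩ = L²/(cL + 2(d/dc)‖φ_c‖²)` for the
linearized ILW operator. -/
theorem inner_inv_one_formula
    {E : Type*} [NormedAddCommGroup E] [InnerProductSpace ℝ E]
    (T : E →ₗ[ℝ] E) (hsymm : ∀ x y : E, ⟪T x, y⟫ = ⟪x, T y⟫)
    (o φ u ψ : E) (c β : ℝ) (Λ : ℝ) (hΛdef : Λ = ⟪o, o⟫) (hΛ : 0 < Λ)
    (hφo : ⟪φ, o⟫ = 0)
    (hTo : T o = c • o - (2:ℝ) • φ)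
    (hTu : T u = o)
    (hTψ : T ψ = -φ - (β / Λ) • o)
    (hψo : ⟪ψ, o⟫ = 0) :
    ⟪u, o⟫ * (c * Λ + 2 * β) = Λ ^ 2 ∧
    (0 < c * Λ + 2 * β → ⟪u, o⟫ = Λ ^ 2 / (c * Λ + 2 * β) ∧ 0 < ⟪u, o⟫) :=
  inner_inv_one_formula_general (T.toPMap ⊤) (fun x y => hsymm x y)
    ⟨o, trivial⟩ ⟨u, trivial⟩ ⟨ψ, trivial⟩ φ c β Λ hΛdef hΛ hTo hTu hTψ hψo
end

section
/- Let E be a real inner product space and T : E → E a symmetric linear map (⟨T x, y⟩ = ⟨x, T y⟩ for all x, y). Let 𝟙, φ, u, ψ, v, w ∈ E and c, β, γ ∈ ℝ, and set Λ = ⟨𝟙, 𝟙⟩. Assume Λ > 0, ⟨φ, 𝟙⟩ = 0, T 𝟙 = c·𝟙 − 2·φ, T u = 𝟙, T ψ = −φ − (β/Λ)·𝟙, ⟨ψ, 𝟙⟩ = 0, T v = φ, T w = 0, ⟨w, φ⟩ = 0, and c·u − 2·v − 𝟙 = γ·w. Then ⟨v, φ⟩·⟨u, 𝟙⟩ − ⟨u,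 φ⟩² = −(β/2)·⟨u, 𝟙⟩. In particular, if β > 0 and ⟨u,𝟙⟩ > 0 this quantity is strictly negative. -/
open RealInnerProductSpace

/-!
Write `a = ⟨u, 𝟙⟩`, `b = ⟨u, φ⟩`, `e = ⟨v, φ⟩`. Moving `T` across the pairings of `u` and `v` with
`T 𝟙` gives `Λ = c a - 2 b` and `c b = 2 e`, so that `2 (e a - b²) = b (c a - 2 b) = b Λ`. Moving
it across the pairing of `u` with `T ψ` gives `b Λ = -β a`.
-/

section CommRing

variable {R M : Type*} [CommRing R] [AddCommGroup M] [Module R M]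
  {B : LinearMap.BilinForm R M} {T : M → M} {o φ u v ψ : M} {c d s : R}

theorem apply_self_eq_of_map_eq_sub (hT : B.IsSelfAdjoint T) (hTu : T u = o)
    (hTo : T o = c • o - d • φ) : B o o = c * B u o - d * B u φ :=
  calc B o o = B (T u) o := by rw [hTu]
    _ = B u (T o) := hT u o
    _ = c * B u o - d * B u φ := by simp [hTo]

theorem mul_apply_preimage_eq (hT : B.IsSelfAdjoint T) (hoφ : B o φ = 0) (hTu : T u = o)
    (hTv : T v = φ) (hTo : T o = c • o - d • φ) : d * B v φ = c * B u φ := by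
  have apply_o_v : B o v = B u φ := by rw [← hTu, hT u v, hTv]
  have apply_φ_v : B φ v = B v φ := by rw [← hTv, hT v v]
  have apply_To_v : c * B o v - d * B φ v = 0 :=
    calc c * B o v - d * B φ v = B (T o) v := by simp [hTo]
      _ = B o (T v) := hT o v
      _ = 0 := by rw [hTv, hoφ]
  rw [← apply_o_v, ← apply_φ_v]
  exact (sub_eq_zero.mp apply_To_v).symm

theorem mul_det_preimages_eq (hT : B.IsSelfAdjoint T) (hoφ : B o φ = 0) (hTu : T u = o)
    (hTv : T v = φ) (hTo : T o = c • o - d • φ) :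
    d * (B v φ * B u o - B u φ ^ 2) = B u φ * B o o :=
  calc d * (B v φ * B u o - B u φ ^ 2)
      = d * B v φ * B u o - d * B u φ ^ 2 := by ring
    _ = c * B u φ * B u o - d * B u φ ^ 2 := by rw [mul_apply_preimage_eq hT hoφ hTu hTv hTo]
    _ = B u φ * (c * B u o - d * B u φ) := by ring
    _ = B u φ * B o o := by rw [apply_self_eq_of_map_eq_sub hT hTu hTo]

theorem apply_eq_neg_mul_of_map_eq_neg_sub (hT : B.IsSelfAdjoint T) (hoψ : B o ψ = 0)
    (hTu : T u = o) (hTψ : T ψ = -φ - s • o) : B u φ = -(s * B u o) := by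
  have apply_Tψ : -B u φ - s * B u o = 0 :=
    calc -B u φ - s * B u o = B u (T ψ) := by simp [hTψ]
      _ = B (T u) ψ := (hT u ψ).symm
      _ = 0 := by rw [hTu, hoψ]
  linear_combination -apply_Tψ

end CommRing

theorem det_preimages_eq {K V : Type*} [Field K] [AddCommGroup V] [Module K V]
    {B : LinearMap.BilinForm K V} {T : V → V} {o φ u v ψ : V} {c d β : K}
    (hT : B.IsSelfAdjoint T) (hd : d ≠ 0) (hoo : B o o ≠ 0) (hoφ : B o φ = 0) (hoψ : B o ψ = 0)
    (hTo : T o = c • o - d • φ) (hTu : T u = o) (hTv : T v = φ)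
    (hTψ : T ψ = -φ - (β / B o o) • o) :
    B v φ * B u o - B u φ ^ 2 = -(β / d) * B u o := by
  refine mul_left_cancel₀ hd ?_
  calc d * (B v φ * B u o - B u φ ^ 2)
      = B u φ * B o o := mul_det_preimages_eq hT hoφ hTu hTv hTo
    _ = -(β / B o o * B u o) * B o o := by
      rw [← apply_eq_neg_mul_of_map_eq_neg_sub hT hoψ hTu hTψ]
    _ = d * (-(β / d) * B u o) := by field_simp

theorem det_D_formula_general {K V : Type*} [Field K] [LinearOrder K] [IsStrictOrderedRing K]
    [AddCommGroup V] [Module K V] {B : LinearMap.BilinForm K V} {T : V → V} {o φ u v ψ : V}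
    {c d β : K} (hT : B.IsSelfAdjoint T) (hd : 0 < d) (hoo : B o o ≠ 0) (hoφ : B o φ = 0)
    (hoψ : B o ψ = 0) (hTo : T o = c • o - d • φ) (hTu : T u = o) (hTv : T v = φ)
    (hTψ : T ψ = -φ - (β / B o o) • o) :
    B v φ * B u o - B u φ ^ 2 = -(β / d) * B u o ∧
    (0 < β → 0 < B u o → B v φ * B u o - B u φ ^ 2 < 0) := by
  have det_eq := det_preimages_eq hT hd.ne' hoo hoφ hoψ hTo hTu hTv hTψ
  refine ⟨det_eq, fun hβ huo => ?_⟩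
  rw [det_eq]
  exact mul_neg_of_neg_of_pos (neg_neg_of_pos (div_pos hβ hd)) huo

/-- Abstract form of the determinant formula
`det(D) = -(1/2)(1/⟨ℒ⁻¹1,1⟩)(d/dc)∫φ_c²` for the `2×2` matrix built from
`⟨ℒ⁻¹φ_c,φ_c⟩, ⟨ℒ⁻¹φ_c,1⟩, ⟨ℒ⁻¹1,1⟩`. -/
theorem det_D_formula
    {E : Type*} [NormedAddCommGroup E] [InnerProductSpace ℝ E]
    (T : E →ₗ[ℝ] E) (hsymm : ∀ x y : E, ⟪T x, y⟫ = ⟪x, T y⟫)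
    (o φ u ψ v w : E) (c β γ : ℝ) (Λ : ℝ) (hΛdef : Λ = ⟪o, o⟫) (hΛ : 0 < Λ)
    (hφo : ⟪φ, o⟫ = 0)
    (hTo : T o = c • o - (2:ℝ) • φ)
    (hTu : T u = o)
    (hTψ : T ψ = -φ - (β / Λ) • o)
    (hψo : ⟪ψ, o⟫ = 0)
    (hTv : T v = φ)
    (hTw : T w = 0)
    (hwφ : ⟪w, φ⟫ = 0)
    (hker : c • u - (2:ℝ) • v - o = γ • w) :
    ⟪v, φ⟫ * ⟪u, o⟫ - ⟪u, φ⟫ ^ 2 = -(β / 2) * ⟪u, o⟫ ∧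
    (0 < β → 0 < ⟪u, o⟫ → ⟪v, φ⟫ * ⟪u, o⟫ - ⟪u, φ⟫ ^ 2 < 0) := by
  subst hΛdef
  exact det_D_formula_general (B := innerₗ E) (T := T) hsymm two_pos hΛ.ne'
    ((real_inner_comm φ o).trans hφo) ((real_inner_comm ψ o).trans hψo) hTo hTu hTv hTψ
end

section
/- Let q be a real number with 0 < q < 1 and let w ∈ ℂ satisfy |Im w| < (−log q)/2. Define A(w) = Σ_{n∈ℤ} (−1)ⁿ q^{n²} e^{2inw} (the Jacobi theta function θ₄(w,q)), A'(w) = Σ_{n∈ℤ} (−1)ⁿ q^{n²} (2in) e^{2inw} (its term-wise derivative series, which converges absolutely), and B(w) = Σ_{n=1}^∞ (qⁿ/(1 − q^{2n})) sin(2nw) (which converges absolutely on the strip |Im w| < (−log q)/2). Then A'(w) = 4·A(w)·B(w). -/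
open Complex

/-!
Put `z = e^{2iw}`, `aₙ = (-1)ⁿ q^{n²}` and `cₙ = (q⁻ⁿ - qⁿ)⁻¹ = qⁿ / (1 - q²ⁿ)`, with `c₀ = 0`.
Since `cₙ` is odd in `n`, the sine series is `(2i)⁻¹ ∑ cₙ zⁿ`, so the claim compares the Laurent
coefficients of `(∑ aₙ zⁿ) (∑ cₙ zⁿ) = -∑ m aₘ zᵐ` on the annulus `|q| < |z| < |q|⁻¹`. As
`aₘ₋ₙ = aₘ aₙ q^{-2mn}`, this amounts to `S(q^{2m}) = m` for all `m : ℤ`, where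
`S(z) = ∑ aₙ cₙ zⁿ`. Oddness gives `S(1) = 0`, and `aₙ cₙ (qⁿ - q⁻ⁿ) = -aₙ` for `n ≠ 0` gives
`S(qz) - S(q⁻¹z) = 1 - θ₄(z)`. At `z = q^{2m+1}` the theta function vanishes, so `S` grows by `1`
from `q^{2m}` to `q^{2m+2}`.
-/

section Series

lemma tsum_eq_zero_of_comp_equiv_eq_neg {α E : Type*} [AddCommGroup E] [TopologicalSpace E]
    [IsTopologicalAddGroup E] [T2Space E] [IsAddTorsionFree E] {f : α → E} (e : α ≃ α)
    (hf : ∀ a, f (e a) = -f a) : ∑' a, f a = 0 := by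
  rw [← self_eq_neg, ← tsum_neg, ← e.tsum_eq f]
  exact tsum_congr hf

lemma tsum_mul_tsum_eq_tsum_tsum_sub {G R : Type*} [AddGroup G] [NormedRing R] [CompleteSpace R]
    {f g : G → R} (hf : Summable fun n ↦ ‖f n‖) (hg : Summable fun n ↦ ‖g n‖) :
    (∑' n, f n) * ∑' n, g n = ∑' m, ∑' n, f (m - n) * g n := by
  let shear : G × G ≃ G × G :=
    { toFun := fun p ↦ (p.1 - p.2, p.2)
      invFun := fun p ↦ (p.1 + p.2, p.2)
      left_inv := fun p ↦ by simp
      right_inv := fun p ↦ by simp }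
  rw [tsum_mul_tsum_of_summable_norm hf hg, ← shear.tsum_eq]
  exact (shear.summable_iff.2 (summable_mul_of_summable_norm hf hg)).tsum_prod

lemma tsum_mul_sin_of_odd {f : ℤ → ℂ} (hf : f.Odd) {x : ℂ}
    (hs : Summable fun n : ℤ ↦ f n * cexp (n * (x * I))) :
    ∑' n : ℕ, f (n + 1) * sin ((n + 1) * x) =
      -I / 2 * ∑' n : ℤ, f n * cexp (n * (x * I)) := by
  have hpair (n : ℕ) : -I / 2 * (f n * cexp ((n : ℤ) * (x * I)) +
      f (-n) * cexp ((-n : ℤ) * (x * I))) = f n * sin (n * x) := by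
    rw [hf, sin]
    push_cast
    ring_nf
  have hsum := hs.hasSum.nat_add_neg.mul_left (-I / 2)
  simp only [hpair, hf.map_zero, zero_mul, add_zero] at hsum
  rw [← hsum.tsum_eq, hsum.summable.tsum_eq_zero_add]
  simp

end Series

section Field

variable {K : Type*} [Field K] {q z : K}

/-- The term `(-1)ⁿ q^{n²} zⁿ` of the Laurent series of `θ₄` in the variable `z = e^{2iw}`. -/
def theta₄Term (q z : K) (n : ℤ) : K := (-1) ^ n * q ^ (n ^ 2) * z ^ n

/-- The coefficient `qⁿ / (1 - q²ⁿ)` of the logarithmic derivative of `θ₄`, written as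
`(q⁻ⁿ - qⁿ)⁻¹` so that it is visibly odd in `n`. It is `0⁻¹ = 0` at `n = 0`. -/
def lambertCoeff (q : K) (n : ℤ) : K := (q ^ (-n) - q ^ n)⁻¹

lemma theta₄Term_zero : theta₄Term q z 0 = 1 := by simp [theta₄Term]

lemma theta₄Term_inv_neg (n : ℤ) : theta₄Term q z⁻¹ (-n) = theta₄Term q z n := by
  rw [theta₄Term, theta₄Term, neg_sq, inv_zpow', neg_neg, zpow_neg, ← inv_zpow, inv_neg_one]

lemma theta₄Term_sub_mul_zpow (hq : q ≠ 0) (hz : z ≠ 0) (m n : ℤ) :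
    theta₄Term q z (m - n) * z ^ n =
      theta₄Term q z m * theta₄Term q (q ^ (2 * -m)) n := by
  have hsign : (-1 : K) ^ (m - n) = (-1) ^ m * (-1) ^ n := by
    rw [zpow_sub₀ (by simp), div_eq_mul_inv, ← inv_zpow, inv_neg_one]
  have hgauss : q ^ ((m - n) ^ 2) = q ^ (m ^ 2) * q ^ (n ^ 2) * (q ^ (2 * -m)) ^ n := by
    rw [← zpow_mul, ← zpow_add₀ hq, ← zpow_add₀ hq]
    ring_nf
  have hpow : z ^ m = z ^ (m - n) * z ^ n := by rw [← zpow_add₀ hz, sub_add_cancel]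
  rw [theta₄Term, theta₄Term, theta₄Term, hsign, hgauss, hpow]
  ring

lemma theta₄Term_zpow_reflect (hq : q ≠ 0) {k : ℤ} (hk : Odd k) (n : ℤ) :
    theta₄Term q (q ^ k) (-k - n) = -theta₄Term q (q ^ k) n := by
  have hsign : (-1 : K) ^ (-k - n) = -(-1) ^ n := by
    rw [zpow_sub₀ (by simp), hk.neg.neg_one_zpow, div_eq_mul_inv, ← inv_zpow, inv_neg_one,
      neg_one_mul]
  have hgauss : q ^ ((-k - n) ^ 2) * (q ^ k) ^ (-k - n) = q ^ (n ^ 2) * (q ^ k) ^ n := by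
    rw [← zpow_mul, ← zpow_mul, ← zpow_add₀ hq, ← zpow_add₀ hq]
    ring_nf
  rw [theta₄Term, theta₄Term, hsign, mul_assoc, hgauss]
  ring

lemma theta₄Term_mul_sub_theta₄Term_inv_mul (n : ℤ) :
    theta₄Term q (q * z) n - theta₄Term q (q⁻¹ * z) n =
      -theta₄Term q z n * (q ^ (-n) - q ^ n) := by
  simp only [theta₄Term, mul_zpow, inv_zpow, zpow_neg]
  ring

lemma lambertCoeff_odd (q : K) : (lambertCoeff q).Odd := fun n ↦ by
  rw [lambertCoeff, lambertCoeff, neg_neg, ← neg_sub, inv_neg]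

lemma lambertCoeff_zero : lambertCoeff q 0 = 0 := by simp [lambertCoeff]

lemma lambertCoeff_natCast (hq : q ≠ 0) (n : ℕ) :
    lambertCoeff q n = q ^ n / (1 - q ^ (2 * n)) := by
  have hqn : q ^ n ≠ 0 := pow_ne_zero n hq
  have hfactor : q ^ (-n : ℤ) - q ^ (n : ℤ) = (q ^ n)⁻¹ * (1 - q ^ (2 * n)) := by
    rw [zpow_neg, zpow_natCast]
    field_simp
    ring
  rw [lambertCoeff, hfactor, mul_inv, inv_inv, div_eq_mul_inv]

end Field

section NormedField

variable {𝕜 : Type*} [NormedField 𝕜] {q z : 𝕜}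

/-- The series `∑ aₙ cₙ zⁿ`, whose coefficients are the products of those of `θ₄` and of its
logarithmic derivative. The coefficient of `zᵐ` in the product of the two series is `aₘ` times the
value of this one at `q⁻²ᵐ`. -/
noncomputable def lambertTheta₄ (q z : 𝕜) : 𝕜 :=
  ∑' n : ℤ, theta₄Term q z n * lambertCoeff q n

lemma zpow_neg_sub_zpow_ne_zero (hq : q ≠ 0) (hq1 : ‖q‖ < 1) {n : ℤ} (hn : n ≠ 0) :
    q ^ (-n) - q ^ n ≠ 0 := fun h ↦ by
  have hnorm : ‖q‖ ^ (-n) = ‖q‖ ^ n := by rw [← norm_zpow, ← norm_zpow, sub_eq_zero.1 h]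
  have := zpow_right_injective₀ (norm_pos_iff.2 hq) hq1.ne hnorm
  omega

lemma norm_lambertCoeff_natCast_le (hq : q ≠ 0) (hq1 : ‖q‖ < 1) (n : ℕ) :
    ‖lambertCoeff q n‖ ≤ ‖q‖ ^ n / (1 - ‖q‖ ^ 2) := by
  have hpos : 0 < 1 - ‖q‖ ^ 2 := sub_pos.2 (pow_lt_one₀ (norm_nonneg q) hq1 two_ne_zero)
  rcases eq_or_ne n 0 with rfl | hn
  · rw [Nat.cast_zero, lambertCoeff_zero, norm_zero]
    positivity
  have hdenom : 1 - ‖q‖ ^ 2 ≤ ‖1 - q ^ (2 * n)‖ := calc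
    1 - ‖q‖ ^ 2 ≤ 1 - ‖q‖ ^ (2 * n) :=
      sub_le_sub_left (pow_le_pow_of_le_one (norm_nonneg q) hq1.le (by omega)) 1
    _ = ‖(1 : 𝕜)‖ - ‖q ^ (2 * n)‖ := by rw [norm_one, norm_pow]
    _ ≤ ‖1 - q ^ (2 * n)‖ := norm_sub_norm_le _ _
  rw [lambertCoeff_natCast hq, norm_div, norm_pow]
  gcongr

lemma norm_lambertCoeff_le (hq : q ≠ 0) (hq1 : ‖q‖ < 1) (n : ℤ) :
    ‖lambertCoeff q n‖ ≤ 1 / (1 - ‖q‖ ^ 2) := by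
  have hpos : 0 < 1 - ‖q‖ ^ 2 := sub_pos.2 (pow_lt_one₀ (norm_nonneg q) hq1 two_ne_zero)
  have hnat (k : ℕ) : ‖lambertCoeff q k‖ ≤ 1 / (1 - ‖q‖ ^ 2) :=
    (norm_lambertCoeff_natCast_le hq hq1 k).trans
      (by gcongr; exact pow_le_one₀ (norm_nonneg q) hq1.le)
  obtain ⟨k, rfl | rfl⟩ := n.eq_nat_or_neg
  · exact hnat k
  · rw [lambertCoeff_odd, norm_neg]
    exact hnat k

lemma norm_lt_one_of_norm_mul_lt_one (hz0 : z ≠ 0) (hz : ‖q * z‖ < 1) (hz' : ‖q * z⁻¹‖ < 1) :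
    ‖q‖ < 1 := by
  refine (sq_lt_one_iff₀ (norm_nonneg q)).1 ?_
  calc ‖q‖ ^ 2 = ‖q * z‖ * ‖q * z⁻¹‖ := by
        rw [← norm_mul, ← norm_pow]
        field_simp
    _ < 1 := mul_lt_one_of_nonneg_of_lt_one_left (norm_nonneg _) hz hz'.le

lemma summable_norm_lambertCoeff_mul_zpow (hq : q ≠ 0) (hz0 : z ≠ 0) (hz : ‖q * z‖ < 1)
    (hz' : ‖q * z⁻¹‖ < 1) : Summable fun n : ℤ ↦ ‖lambertCoeff q n * z ^ n‖ := by
  have hq1 : ‖q‖ < 1 := norm_lt_one_of_norm_mul_lt_one hz0 hz hz'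
  have hnat {y : 𝕜} (hy : ‖q * y‖ < 1) : Summable fun n : ℕ ↦ ‖lambertCoeff q n * y ^ n‖ := by
    refine .of_nonneg_of_le (fun n ↦ norm_nonneg _) (fun n ↦ ?_)
      ((summable_geometric_of_lt_one (norm_nonneg _) hy).div_const (1 - ‖q‖ ^ 2))
    calc ‖lambertCoeff q n * y ^ n‖
        ≤ ‖q‖ ^ n / (1 - ‖q‖ ^ 2) * ‖y‖ ^ n := by
          rw [norm_mul, norm_pow]
          gcongr
          exact norm_lambertCoeff_natCast_le hq hq1 n
      _ = ‖q * y‖ ^ n / (1 - ‖q‖ ^ 2) := by rw [norm_mul, mul_pow, div_mul_eq_mul_div]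
  refine .of_nat_of_neg ?_ ?_
  · simpa only [zpow_natCast] using hnat hz
  · simpa only [lambertCoeff_odd _ _, zpow_neg, zpow_natCast, inv_pow, neg_mul, norm_neg]
      using hnat hz'

lemma summable_norm_pow_sq_mul_pow (hq1 : ‖q‖ < 1) (z : 𝕜) :
    Summable fun n : ℕ ↦ ‖q ^ (n ^ 2) * z ^ n‖ := by
  have hlim : Filter.Tendsto (fun n : ℕ ↦ ‖q‖ ^ n * ‖z‖) Filter.atTop (nhds 0) := by
    simpa using (tendsto_pow_atTop_nhds_zero_of_lt_one (norm_nonneg q) hq1).mul_const ‖z‖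
  refine summable_geometric_two.of_norm_bounded_eventually_nat ?_
  filter_upwards [hlim.eventually_le_const one_half_pos] with n hn
  calc ‖‖q ^ (n ^ 2) * z ^ n‖‖ = (‖q‖ ^ n * ‖z‖) ^ n := by
        rw [norm_norm, norm_mul, norm_pow, norm_pow, mul_pow, ← pow_mul, sq]
    _ ≤ (1 / 2) ^ n := by gcongr

lemma summable_norm_theta₄Term (hq1 : ‖q‖ < 1) (z : 𝕜) :
    Summable fun n : ℤ ↦ ‖theta₄Term q z n‖ := by
  have hnat (y : 𝕜) : Summable fun n : ℕ ↦ ‖theta₄Term q y n‖ := by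
    refine (summable_norm_pow_sq_mul_pow hq1 y).congr fun n ↦ ?_
    simp only [theta₄Term, norm_mul, norm_zpow, norm_neg, norm_one, one_zpow, one_mul, norm_pow]
    norm_cast
  refine .of_nat_of_neg (hnat z) ((hnat z⁻¹).congr fun n ↦ ?_)
  rw [← theta₄Term_inv_neg, inv_inv]

lemma summable_theta₄Term_mul_lambertCoeff [CompleteSpace 𝕜] (hq : q ≠ 0) (hq1 : ‖q‖ < 1)
    (z : 𝕜) : Summable fun n : ℤ ↦ theta₄Term q z n * lambertCoeff q n := by
  refine .of_norm_bounded
    ((summable_norm_theta₄Term hq1 z).mul_right (1 / (1 - ‖q‖ ^ 2))) fun n ↦ ?_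
  rw [norm_mul]
  gcongr
  exact norm_lambertCoeff_le hq hq1 n

lemma lambertTheta₄_mul_sub_lambertTheta₄_inv_mul [CompleteSpace 𝕜] (hq : q ≠ 0)
    (hq1 : ‖q‖ < 1) (z : 𝕜) :
    lambertTheta₄ q (q * z) - lambertTheta₄ q (q⁻¹ * z) = 1 - ∑' n : ℤ, theta₄Term q z n := by
  have hterm (n : ℤ) : theta₄Term q (q * z) n * lambertCoeff q n -
      theta₄Term q (q⁻¹ * z) n * lambertCoeff q n =
        (if n = 0 then 1 else 0) - theta₄Term q z n := by
    rcases eq_or_ne n 0 with rfl | hn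
    · simp [lambertCoeff_zero, theta₄Term_zero]
    · rw [← sub_mul, theta₄Term_mul_sub_theta₄Term_inv_mul, if_neg hn, lambertCoeff,
        mul_inv_cancel_right₀ (zpow_neg_sub_zpow_ne_zero hq hq1 hn), zero_sub]
  rw [lambertTheta₄, lambertTheta₄,
    ← (summable_theta₄Term_mul_lambertCoeff hq hq1 _).tsum_sub
      (summable_theta₄Term_mul_lambertCoeff hq hq1 _), tsum_congr hterm,
    (hasSum_ite_eq 0 1).summable.tsum_sub (summable_norm_theta₄Term hq1 z).of_norm, tsum_ite_eq]

variable [CharZero 𝕜]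

lemma tsum_theta₄Term_zpow_of_odd (hq : q ≠ 0) {k : ℤ} (hk : Odd k) :
    ∑' n : ℤ, theta₄Term q (q ^ k) n = 0 :=
  tsum_eq_zero_of_comp_equiv_eq_neg (Equiv.subLeft (-k)) (theta₄Term_zpow_reflect hq hk)

lemma lambertTheta₄_one (q : 𝕜) : lambertTheta₄ q 1 = 0 :=
  tsum_eq_zero_of_comp_equiv_eq_neg (Equiv.neg ℤ) fun n ↦ by
    rw [Equiv.neg_apply, lambertCoeff_odd, mul_neg, ← theta₄Term_inv_neg n, inv_one]

variable [CompleteSpace 𝕜]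

lemma lambertTheta₄_zpow_two_mul (hq : q ≠ 0) (hq1 : ‖q‖ < 1) (m : ℤ) :
    lambertTheta₄ q (q ^ (2 * m)) = m := by
  have hstep (k : ℤ) : lambertTheta₄ q (q ^ (2 * (k + 1))) - lambertTheta₄ q (q ^ (2 * k)) = 1 := by
    have h := lambertTheta₄_mul_sub_lambertTheta₄_inv_mul hq hq1 (q ^ (2 * k + 1))
    rw [tsum_theta₄Term_zpow_of_odd hq (odd_two_mul_add_one k), sub_zero, ← zpow_one_add₀ hq,
      zpow_add_one₀ hq, mul_comm _ q, inv_mul_cancel_left₀ hq] at h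
    rwa [show 2 * (k + 1) = 1 + (2 * k + 1) by ring]
  induction m with
  | zero => simp [lambertTheta₄_one]
  | succ i ih =>
    push_cast at ih ⊢
    linear_combination hstep i + ih
  | pred i ih =>
    have h := hstep (-i - 1)
    rw [sub_add_cancel, ih] at h
    push_cast at h ⊢
    linear_combination -h

theorem tsum_theta₄Term_mul_tsum_lambertCoeff (hq : q ≠ 0) (hz0 : z ≠ 0) (hz : ‖q * z‖ < 1)
    (hz' : ‖q * z⁻¹‖ < 1) :
    (∑' n : ℤ, theta₄Term q z n) * ∑' n : ℤ, lambertCoeff q n * z ^ n =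
      -∑' m : ℤ, m * theta₄Term q z m := by
  have hq1 : ‖q‖ < 1 := norm_lt_one_of_norm_mul_lt_one hz0 hz hz'
  have hcoeff (m : ℤ) : ∑' n : ℤ, theta₄Term q z (m - n) * (lambertCoeff q n * z ^ n) =
      -(m * theta₄Term q z m) := calc
    _ = ∑' n : ℤ, theta₄Term q z m * (theta₄Term q (q ^ (2 * -m)) n * lambertCoeff q n) :=
      tsum_congr fun n ↦ by
        linear_combination lambertCoeff q n * theta₄Term_sub_mul_zpow hq hz0 m n
    _ = theta₄Term q z m * lambertTheta₄ q (q ^ (2 * -m)) := tsum_mul_left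
    _ = -(m * theta₄Term q z m) := by
      rw [lambertTheta₄_zpow_two_mul hq hq1, Int.cast_neg, mul_neg, mul_comm]
  rw [tsum_mul_tsum_eq_tsum_tsum_sub (summable_norm_theta₄Term hq1 z)
    (summable_norm_lambertCoeff_mul_zpow hq hz0 hz hz'), tsum_congr hcoeff, tsum_neg]

end NormedField

section Complex

lemma norm_mul_exp_two_mul_I_lt_one {q w : ℂ} (hq : q ≠ 0)
    (hw : |w.im| < -Real.log ‖q‖ / 2) : ‖q * cexp (2 * w * I)‖ < 1 := by
  have hre : (2 * w * I).re = -2 * w.im := by simp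
  rw [norm_mul, norm_exp, hre, ← Real.exp_log (norm_pos_iff.2 hq), ← Real.exp_add,
    Real.exp_lt_one_iff]
  linarith [(abs_lt.1 hw).1]

lemma tsum_mul_sin_eq_tsum_lambertCoeff_mul_zpow {q w : ℂ} (hq : q ≠ 0)
    (hs : Summable fun n : ℤ ↦ lambertCoeff q n * cexp (2 * w * I) ^ n) :
    ∑' n : ℕ, q ^ (n + 1) / (1 - q ^ (2 * (n + 1))) * sin (2 * (n + 1) * w) =
      -I / 2 * ∑' n : ℤ, lambertCoeff q n * cexp (2 * w * I) ^ n := by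
  simp only [← exp_int_mul] at hs ⊢
  rw [← tsum_mul_sin_of_odd (lambertCoeff_odd q) hs]
  refine tsum_congr fun n ↦ ?_
  have hcoeff : lambertCoeff q (n + 1) = q ^ (n + 1) / (1 - q ^ (2 * (n + 1))) :=
    mod_cast lambertCoeff_natCast hq (n + 1)
  rw [hcoeff, mul_left_comm, mul_assoc]

theorem theta4_log_deriv_general (q : ℂ) (hq : q ≠ 0) (w : ℂ)
    (hw : |w.im| < (-Real.log ‖q‖) / 2) :
    (∑' n : ℤ, (-1 : ℂ) ^ n * q ^ (n ^ 2) * (2 * I * n) * cexp (2 * I * n * w)) =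
      4 * (∑' n : ℤ, (-1 : ℂ) ^ n * q ^ (n ^ 2) * cexp (2 * I * n * w))
        * (∑' n : ℕ, (q ^ (n + 1) / (1 - q ^ (2 * (n + 1)))) * sin (2 * (n + 1) * w)) := by
  set z := cexp (2 * w * I) with hz_def
  have hz : ‖q * z‖ < 1 := norm_mul_exp_two_mul_I_lt_one hq hw
  have hz' : ‖q * z⁻¹‖ < 1 := by
    have h := norm_mul_exp_two_mul_I_lt_one (w := -w) hq (by simpa using hw)
    rwa [mul_neg, neg_mul, exp_neg] at h
  have hterm (n : ℤ) : (-1 : ℂ) ^ n * q ^ (n ^ 2) * cexp (2 * I * n * w) = theta₄Term q z n := by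
    rw [theta₄Term, hz_def, ← exp_int_mul]
    ring_nf
  have hterm' (n : ℤ) : (-1 : ℂ) ^ n * q ^ (n ^ 2) * (2 * I * n) * cexp (2 * I * n * w) =
      2 * I * (n * theta₄Term q z n) := by
    rw [← hterm]
    ring
  have hprod := tsum_theta₄Term_mul_tsum_lambertCoeff hq (exp_ne_zero _) hz hz'
  have hsine := tsum_mul_sin_eq_tsum_lambertCoeff_mul_zpow hq
    (summable_norm_lambertCoeff_mul_zpow hq (exp_ne_zero _) hz hz').of_norm
  rw [tsum_congr hterm, tsum_congr hterm', tsum_mul_left, hsine]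
  linear_combination 2 * I * hprod

end Complex

/-- Logarithmic derivative of the Jacobi theta function `θ₄`: in the strip
`|Im w| < (-log q)/2`, with `A(w) = Σ_{n∈ℤ} (-1)ⁿ q^{n²} e^{2inw}`,
its term-wise derivative `A'(w) = Σ_{n∈ℤ} (-1)ⁿ q^{n²} (2in) e^{2inw}` and
`B(w) = Σ_{n≥1} (qⁿ/(1-q^{2n})) sin(2nw)`, one has `A'(w) = 4 A(w) B(w)`. -/
theorem theta4_log_deriv (q : ℝ) (hq0 : 0 < q) (hq1 : q < 1)
    (w : ℂ) (hw : |w.im| < (-Real.log q) / 2) :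
    (∑' n : ℤ, (-1 : ℂ) ^ n * (q : ℂ) ^ (n ^ 2) * (2 * Complex.I * n)
        * Complex.exp (2 * Complex.I * n * w)) =
      4 * (∑' n : ℤ, (-1 : ℂ) ^ n * (q : ℂ) ^ (n ^ 2)
            * Complex.exp (2 * Complex.I * n * w))
        * (∑' n : ℕ, ((q : ℂ) ^ (n + 1) / (1 - (q : ℂ) ^ (2 * (n + 1))))
            * Complex.sin (2 * (n + 1) * w)) := by
  refine theta4_log_deriv_general q (ofReal_ne_zero.2 hq0.ne') w ?_
  rwa [norm_real, Real.norm_of_nonneg hq0.le]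
end
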